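/- Suppose the Stochastic Dynamical System generated by μ satisfies conditions (R) and (U). Then for every ergodic invariant Radon measure ν, its support supp ν is either minimal among nonempty closed Γ-invariant sets (i.e., supp ν contains no nonempty closed Γ-invariant set other than itself), or supp ν contains a nonempty Γ-invariant set that is discrete in ℝ (all of its points are isolated). -/

import Mathlib

open MeasureTheory Filter Set Function Topology
open scoped ENNReal NNReal

section SDS

variable {ι : Type*}

/-- An orientation-preserving homeomorphism of `ℝ`, modeled as a strictly increasing
surjection (such a map is automatically a homeomorphism of `ℝ`). -/
def IsOPH (g : ℝ → ℝ) : Prop := StrictMono g ∧ Function.Surjective g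

/-- The Markov chain `X_n^x = g_{ω (n-1)} ∘ ⋯ ∘ g_{ω 0} (x)` driven by the sequence `ω`. -/
def chain (G : ι → ℝ → ℝ) (ω : ℕ → ι) (x : ℝ) : ℕ → ℝ
  | 0 => x
  | n + 1 => G (ω n) (chain G ω x n)

/-- Composition `G l₀ ∘ G l₁ ∘ ⋯` along a list `l`. -/
def comps (G : ι → ℝ → ℝ) (l : List ι) : ℝ → ℝ := l.foldr (fun i f => G i ∘ f) id

/-- The semigroup `Γ*` generated by the maps `G i` under composition. -/
def sgen (G : ι → ℝ → ℝ) : Set (ℝ → ℝ) := {f | ∃ l : List ι, l ≠ [] ∧ f = comps G l}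

variable [MeasurableSpace ι]

/-- `Q` is the product measure `μm^{⊗ℕ}` on `ι^ℕ` (for a discrete base measure `μm`
this property characterizes the product measure). -/
def IsProd (μm : Measure ι) (Q : Measure (ℕ → ι)) : Prop :=
  ∀ (n : ℕ) (c : ℕ → ι),
    Q {ω : ℕ → ι | ∀ k < n, ω k = c k} = ∏ k ∈ Finset.range n, μm {c k}

/-- A Radon measure on `ℝ`: a Borel measure which is finite on compact sets. -/
def IsRadon (ν : Measure ℝ) : Prop := ∀ K : Set ℝ, IsCompact K → ν K < ⊤

/-- Invariance of `ν` for the system generated by the discrete measure `μm` on the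
maps `G i`:  `∫ f dν = Σ_g μ(g) ∫ f(g x) dν(x)` for every continuous compactly
supported `f`. -/
def IsInv (G : ι → ℝ → ℝ) (μm : Measure ι) (ν : Measure ℝ) : Prop :=
  ∀ f : ℝ → ℝ, Continuous f → HasCompactSupport f →
    ∫ x, f x ∂ν = ∑' i : ι, (μm {i}).toReal * ∫ x, f (G i x) ∂ν

/-- Ergodicity: `ν` is invariant and any Borel set whose restriction is again invariant
is either null or conull. -/
def IsErg (G : ι → ℝ → ℝ) (μm : Measure ι) (ν : Measure ℝ) : Prop :=
  IsInv G μm ν ∧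
    ∀ A : Set ℝ, MeasurableSet A → IsInv G μm (ν.restrict A) → ν A = 0 ∨ ν Aᶜ = 0

/-- The support of a measure: points all of whose open neighbourhoods have positive
measure. -/
def msupp (ν : Measure ℝ) : Set ℝ := {x | ∀ U : Set ℝ, IsOpen U → x ∈ U → 0 < ν U}

/-- Condition (R): there is a compact interval visited infinitely often, a.s., from any
starting point. -/
def CondR (G : ι → ℝ → ℝ) (Q : Measure (ℕ → ι)) : Prop :=
  ∃ a b : ℝ, a ≤ b ∧ ∀ x : ℝ, ∀ᵐ ω ∂Q, ∃ᶠ n in atTop, chain G ω x n ∈ Icc a b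

/-- Condition (C): there is an interval `I` such that any compact set can be mapped
into `I` by an element of the semigroup `Γ*`. -/
def CondC (G : ι → ℝ → ℝ) : Prop :=
  ∃ a b : ℝ, ∀ K : Set ℝ, IsCompact K → ∃ g ∈ sgen G, g '' K ⊆ Icc a b

/-- Condition (U): from any point one can move both up and down. -/
def CondU (G : ι → ℝ → ℝ) : Prop :=
  ∀ x : ℝ, ∃ i j : ι, G i x < x ∧ x < G j x

end SDS

/-!
A step of the chain is the action of a kernel `κ` on measures. Condition (R) makes the Green
function of a compact interval infinite, so a measure `m` that is finite on the interval and
satisfies `κ ∘ₘ m ≤ m` is invariant: the defect would be counted infinitely often. Together with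
ergodicity this gives Kac's formula: `ν` is the expected occupation measure of an excursion started
from `ν` restricted to any set of positive measure.

Let `M` be a closed invariant proper subset of the support of `ν`. Then `ν M = 0`, and since the
maps are monotone, preimages of intervals avoiding `M` are intervals avoiding `M`. Hence an
excursion from a gap `A` of `M` accumulates at most `ν A` on any interval avoiding `M`, and by Kac's
formula all gaps charged by `ν` have the same mass `c > 0`. A point of `M` has an interval
neighbourhood of mass less than `c`. It contains at most two points of `M`, as three of them would
enclose a charged gap; so the points of `M` are isolated.

For a nonmeasurable singleton `μm {i}` is an outer measure, so `∑' i, μm {i} ≤ 1` is not automatic.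
It follows from recurrence: an index whose measurable atom is not a singleton can be avoided by the
driving sequence, and so must have weight zero.
-/

section RecurrentKernels

open ProbabilityTheory

variable {α : Type*} [MeasurableSpace α]

/-- The Green function `∑ κᵏ(x, I)` of the kernel `κ` is infinite on `I`: in expectation, the chain
started from any point returns to `I` infinitely often. The kernel need not be Markov. -/
def IsRecurrentSet (κ : Kernel α α) (I : Set α) : Prop :=
  MeasurableSet I ∧ ∀ x, ∑' k, (κ ^ k) x I = ⊤

/-- The counterpart of `IsErg` for a kernel `κ` on an arbitrary space: `ν` is `κ`-invariant and
cannot be split into two nonzero invariant restrictions. -/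
def IsErgodicMeasure (κ : Kernel α α) (ν : Measure α) : Prop :=
  κ.Invariant ν ∧
    ∀ A : Set α, MeasurableSet A → κ.Invariant (ν.restrict A) → ν A = 0 ∨ ν Aᶜ = 0

lemma exists_eq_add_of_measure_le {m ν : Measure α} [SigmaFinite ν] (h : m ≤ ν) :
    ∃ d, ν = m + d := by
  have : SigmaFinite m := Measure.sigmaFinite_of_le ν h
  have density_add_compl : (m.rnDeriv ν + fun x => 1 - m.rnDeriv ν x) =ᵐ[ν] 1 := by
    filter_upwards [Measure.rnDeriv_le_one_of_le h] with x hx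
    exact add_tsub_cancel_of_le hx
  refine ⟨ν.withDensity fun x => 1 - m.rnDeriv ν x, ?_⟩
  conv_rhs =>
    enter [1]
    rw [← Measure.withDensity_rnDeriv_eq m ν (Measure.absolutelyContinuous_of_le h)]
  rw [← withDensity_add_left (Measure.measurable_rnDeriv m ν),
    withDensity_congr_ae density_add_compl, withDensity_one]

variable {κ : Kernel α α} {ν m d : Measure α} {A I : Set α}

lemma comp_measure_mono (κ : Kernel α α) (h : m ≤ ν) : κ ∘ₘ m ≤ κ ∘ₘ ν :=
  Measure.le_iff.2 fun E hE => by
    rw [Measure.bind_apply hE κ.aemeasurable, Measure.bind_apply hE κ.aemeasurable]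
    exact lintegral_mono' h le_rfl

lemma eq_pow_comp_add_sum_of_eq_comp_add (h : m = κ ∘ₘ m + d) (n : ℕ) :
    m = (κ ^ n) ∘ₘ m + ∑ k ∈ Finset.range n, (κ ^ k) ∘ₘ d := by
  induction n with
  | zero =>
    rw [Finset.range_zero, Finset.sum_empty, add_zero]
    exact Measure.bind_dirac.symm
  | succ n ih =>
    have step : (κ ^ n) ∘ₘ m = (κ ^ (n + 1)) ∘ₘ m + (κ ^ n) ∘ₘ d := by
      conv_lhs => rw [h, Measure.comp_add, Measure.comp_assoc]
      rfl
    rw [Finset.sum_range_succ, add_comm (∑ k ∈ _, _), ← add_assoc, ← step]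
    exact ih

-- The total mass of the defect `d = m - κ ∘ₘ m` is counted infinitely often in the finite `m I`.
lemma IsRecurrentSet.invariant_of_comp_le [SigmaFinite m] (hI : IsRecurrentSet κ I)
    (hmI : m I ≠ ⊤) (hle : κ ∘ₘ m ≤ m) : κ.Invariant m := by
  obtain ⟨d, hd⟩ := exists_eq_add_of_measure_le hle
  have green_le : ∑' k : ℕ, ((κ ^ k) ∘ₘ d) I ≤ m I := by
    refine ENNReal.tsum_le_of_sum_range_le fun n => ?_
    conv_rhs => rw [eq_pow_comp_add_sum_of_eq_comp_add hd n]
    rw [Measure.add_apply, Measure.finsetSum_apply]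
    exact le_add_self
  have green_eq : ∑' k : ℕ, ((κ ^ k) ∘ₘ d) I = ⊤ * d univ := by
    simp_rw [Measure.bind_apply hI.1 (Kernel.aemeasurable _)]
    rw [← lintegral_tsum fun k => (Kernel.measurable_coe (κ ^ k) hI.1).aemeasurable]
    simp_rw [hI.2, lintegral_const]
  have d_eq_zero : d = 0 := by
    by_contra hne
    rw [green_eq, ENNReal.top_mul (Measure.measure_univ_ne_zero.2 hne), top_le_iff] at green_le
    exact hmI green_le
  rw [d_eq_zero, add_zero] at hd
  exact hd.symm

lemma IsRecurrentSet.invariant_restrict [SigmaFinite ν] (hI : IsRecurrentSet κ I) (hνI : ν I ≠ ⊤)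
    (hν : κ.Invariant ν) (hA : MeasurableSet A) (habs : ∀ᵐ x ∂ν.restrict A, κ x Aᶜ = 0) :
    κ.Invariant (ν.restrict A) := by
  refine hI.invariant_of_comp_le
    (ne_top_of_le_ne_top hνI (Measure.restrict_le_self I)) (Measure.le_iff.2 fun E hE => ?_)
  calc (κ ∘ₘ ν.restrict A) E = ∫⁻ x in A, κ x E ∂ν := Measure.bind_apply hE κ.aemeasurable
    _ = ∫⁻ x in A, κ x (E ∩ A) ∂ν := by
        refine lintegral_congr_ae (habs.mono fun x hx => ?_)
        exact (measure_inter_conull hx).symm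
    _ ≤ ∫⁻ x, κ x (E ∩ A) ∂ν := setLIntegral_le_lintegral A _
    _ = ν (E ∩ A) := by
        rw [← Measure.bind_apply (hE.inter hA) κ.aemeasurable, hν.def]
    _ = ν.restrict A E := (Measure.restrict_apply hE).symm

lemma IsErgodicMeasure.measure_eq_zero_of_ssubset_support [TopologicalSpace α]
    [OpensMeasurableSpace α] [SigmaFinite ν] (hν : IsErgodicMeasure κ ν)
    (hI : IsRecurrentSet κ I) (hνI : ν I ≠ ⊤) (hA : IsClosed A) (habs : ∀ x ∈ A, κ x Aᶜ = 0)
    (hsupp : A ⊂ ν.support) : ν A = 0 := by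
  have restrict_invariant := hI.invariant_restrict hνI hν.1 hA.measurableSet
    (ae_restrict_of_forall_mem hA.measurableSet habs)
  refine (hν.2 A hA.measurableSet restrict_invariant).resolve_right fun hcompl => ?_
  exact hsupp.not_subset (Measure.support_subset_of_isClosed hA hcompl)

lemma IsErgodicMeasure.eq_zero_of_le [SigmaFinite ν] (hν : IsErgodicMeasure κ ν)
    (hI : IsRecurrentSet κ I) (hνI : ν I ≠ ⊤) (hd : κ.Invariant d) (hle : d ≤ ν)
    (hA : ν A ≠ 0) (hdA : d A = 0) : d = 0 := by
  have : SigmaFinite d := Measure.sigmaFinite_of_le ν hle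
  set B : Set α := {x | d.rnDeriv ν x ≠ 0}
  have hB : MeasurableSet B := Measure.measurable_rnDeriv d ν (measurableSet_singleton 0).compl
  have d_null_iff (s : Set α) : d s = 0 ↔ ν (B ∩ s) = 0 := by
    conv_lhs =>
      rw [← Measure.withDensity_rnDeriv_eq d ν (Measure.absolutelyContinuous_of_le hle)]
    exact withDensity_apply_eq_zero' (Measure.measurable_rnDeriv d ν).aemeasurable
  have B_absorbing : ∀ᵐ x ∂ν.restrict B, κ x Bᶜ = 0 := by
    have comp_null : (κ ∘ₘ d) Bᶜ = 0 := by
      rw [hd.def, d_null_iff, inter_compl_self, measure_empty]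
    rw [Measure.bind_apply hB.compl κ.aemeasurable,
      lintegral_eq_zero_iff (Kernel.measurable_coe κ hB.compl)] at comp_null
    rw [ae_restrict_iff'₀ hB.nullMeasurableSet, ae_iff]
    simp only [Classical.not_imp]
    exact (d_null_iff _).1 (ae_iff.1 comp_null)
  have hνB : ν B = 0 := by
    have restrict_invariant := hI.invariant_restrict hνI hν.1 hB B_absorbing
    refine (hν.2 B hB restrict_invariant).resolve_right fun hBc => hA ?_
    have := (d_null_iff A).1 hdA
    rwa [inter_comm, measure_inter_conull hBc] at this
  rw [← Measure.measure_univ_eq_zero, d_null_iff, inter_univ, hνB]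

lemma IsErgodicMeasure.eq_of_le [SigmaFinite ν] (hν : IsErgodicMeasure κ ν)
    (hI : IsRecurrentSet κ I) (hνI : ν I ≠ ⊤) (hm : κ.Invariant m) (hle : m ≤ ν)
    (hA : ν A ≠ 0) (hmA : m.restrict A = ν.restrict A) : m = ν := by
  have : SigmaFinite m := Measure.sigmaFinite_of_le ν hle
  obtain ⟨d, rfl⟩ := exists_eq_add_of_measure_le hle
  have hd : κ.Invariant d := by
    have := hν.1.def
    rwa [Measure.comp_add, hm.def, Measure.add_right_inj] at this
  have hdA : d A = 0 := by
    have := hmA.symm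
    rwa [Measure.restrict_add, ← add_zero (m.restrict A), add_assoc,
      Measure.add_right_inj, zero_add, Measure.restrict_eq_zero] at this
  rw [hν.eq_zero_of_le hI hνI hd (Measure.le_add_left le_rfl) hA hdA, add_zero]

end RecurrentKernels

section Excursions

open ProbabilityTheory

variable {α : Type*} [MeasurableSpace α] {κ : Kernel α α} {ν : Measure α} {A I : Set α}

/-- The mass of `ν` on `A`, carried `n` steps by the kernel `κ` and killed on its return to `A`. -/
noncomputable def excursionMeasure (κ : Kernel α α) (ν : Measure α) (A : Set α) : ℕ → Measure α
  | 0 => ν.restrict A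
  | n + 1 => (κ ∘ₘ excursionMeasure κ ν A n).restrict Aᶜ

/-- The expected occupation measure of an excursion of the chain from `A`, the starting point being
distributed as `ν` on `A`. Kac's formula is the statement that it equals `ν`. -/
noncomputable def occupationMeasure (κ : Kernel α α) (ν : Measure α) (A : Set α) : Measure α :=
  Measure.sum (excursionMeasure κ ν A)

lemma sum_range_succ_excursionMeasure (κ : Kernel α α) (ν : Measure α) (A : Set α) (N : ℕ) :
    ∑ n ∈ Finset.range (N + 1), excursionMeasure κ ν A n =
      ν.restrict A + (κ ∘ₘ ∑ n ∈ Finset.range N, excursionMeasure κ ν A n).restrict Aᶜ := by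
  induction N with
  | zero => simp [excursionMeasure]
  | succ N ih =>
    conv_lhs => rw [Finset.sum_range_succ, ih, add_assoc]
    rw [Finset.sum_range_succ, Measure.comp_add, Measure.restrict_add]
    rfl

lemma occupationMeasure_eq (κ : Kernel α α) (ν : Measure α) (A : Set α) :
    occupationMeasure κ ν A = ν.restrict A + (κ ∘ₘ occupationMeasure κ ν A).restrict Aᶜ := by
  have after_first_step : (κ ∘ₘ occupationMeasure κ ν A).restrict Aᶜ =
      Measure.sum fun n => excursionMeasure κ ν A (n + 1) := by
    rw [occupationMeasure, Measure.bind_sum _ _ κ.aemeasurable, Measure.restrict_sum_of_countable]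
    rfl
  ext E hE
  rw [after_first_step, Measure.add_apply, Measure.sum_apply _ hE, occupationMeasure,
    Measure.sum_apply _ hE, tsum_eq_zero_add' ENNReal.summable]
  rfl

lemma sum_range_excursionMeasure_le (hν : κ.Invariant ν) (hA : MeasurableSet A) (N : ℕ) :
    ∑ n ∈ Finset.range N, excursionMeasure κ ν A n ≤ ν := by
  induction N with
  | zero => exact Measure.zero_le ν
  | succ N ih =>
    rw [sum_range_succ_excursionMeasure]
    conv_rhs => rw [← Measure.restrict_add_restrict_compl (μ := ν) hA]
    gcongr
    exact (comp_measure_mono κ ih).trans_eq hν.def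

lemma occupationMeasure_apply_le {E : Set α} {c : ℝ≥0∞} (hE : MeasurableSet E)
    (h : ∀ N, (∑ n ∈ Finset.range N, excursionMeasure κ ν A n) E ≤ c) :
    occupationMeasure κ ν A E ≤ c := by
  rw [occupationMeasure, Measure.sum_apply _ hE]
  refine ENNReal.tsum_le_of_sum_range_le fun N => ?_
  rw [← Measure.finsetSum_apply]
  exact h N

lemma occupationMeasure_le (hν : κ.Invariant ν) (hA : MeasurableSet A) :
    occupationMeasure κ ν A ≤ ν :=
  Measure.le_iff.2 fun E hE => occupationMeasure_apply_le hE fun N =>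
    sum_range_excursionMeasure_le hν hA N E

lemma occupationMeasure_restrict (κ : Kernel α α) (ν : Measure α) (hA : MeasurableSet A) :
    (occupationMeasure κ ν A).restrict A = ν.restrict A := by
  rw [occupationMeasure_eq, Measure.restrict_add, Measure.restrict_restrict hA,
    Measure.restrict_restrict hA, inter_self, inter_compl_self, Measure.restrict_empty, add_zero]

lemma comp_occupationMeasure_le (hν : κ.Invariant ν) (hA : MeasurableSet A) :
    κ ∘ₘ occupationMeasure κ ν A ≤ occupationMeasure κ ν A := by
  set Θ := occupationMeasure κ ν A
  calc κ ∘ₘ Θ = (κ ∘ₘ Θ).restrict A + (κ ∘ₘ Θ).restrict Aᶜ :=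
        (Measure.restrict_add_restrict_compl hA).symm
    _ ≤ ν.restrict A + (κ ∘ₘ Θ).restrict Aᶜ := by
        gcongr
        exact (comp_measure_mono κ (occupationMeasure_le hν hA)).trans_eq hν.def
    _ = Θ := (occupationMeasure_eq κ ν A).symm

lemma IsErgodicMeasure.occupationMeasure_eq [SigmaFinite ν] (hν : IsErgodicMeasure κ ν)
    (hI : IsRecurrentSet κ I) (hνI : ν I ≠ ⊤) (hA : MeasurableSet A) (hνA : ν A ≠ 0) :
    occupationMeasure κ ν A = ν := by
  have hle : occupationMeasure κ ν A ≤ ν := occupationMeasure_le hν.1 hA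
  have : SigmaFinite (occupationMeasure κ ν A) := Measure.sigmaFinite_of_le ν hle
  have hinv : κ.Invariant (occupationMeasure κ ν A) :=
    hI.invariant_of_comp_le (ne_top_of_le_ne_top hνI (hle I)) (comp_occupationMeasure_le hν.1 hA)
  exact hν.eq_of_le hI hνI hinv hle hνA (occupationMeasure_restrict κ ν hA)

-- By Kac's formula the visits to `J` during an excursion from `A` account for all of `ν J`.
-- Until its return to `A`, an excursion cannot build up more than `ν A` on any set of the family.
lemma IsErgodicMeasure.measure_le_of_comp_le [SigmaFinite ν] (hν : IsErgodicMeasure κ ν)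
    (hI : IsRecurrentSet κ I) (hνI : ν I ≠ ⊤) (hA : MeasurableSet A) (hνA : ν A ≠ 0)
    {𝓙 : Set (Set α)} (hmeas : ∀ J ∈ 𝓙, MeasurableSet J)
    (hsub : ∀ J ∈ 𝓙, J ⊆ A ∨ Disjoint J A)
    (hcomp : ∀ (m : Measure α) (c : ℝ≥0∞), (∀ K ∈ 𝓙, m K ≤ c) → ∀ J ∈ 𝓙, (κ ∘ₘ m) J ≤ c)
    {J : Set α} (hJ : J ∈ 𝓙) : ν J ≤ ν A := by
  have partial_le (N : ℕ) : ∀ K ∈ 𝓙,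
      (∑ n ∈ Finset.range N, excursionMeasure κ ν A n) K ≤ ν A := by
    induction N with
    | zero => simp
    | succ N ih =>
      intro K hK
      rw [sum_range_succ_excursionMeasure, Measure.add_apply, Measure.restrict_apply (hmeas K hK),
        Measure.restrict_apply (hmeas K hK)]
      rcases hsub K hK with hKA | hKA
      · rw [disjoint_compl_right.mono_left hKA |>.inter_eq, measure_empty, add_zero]
        exact measure_mono inter_subset_right
      · rw [hKA.inter_eq, measure_empty, zero_add]
        exact (measure_mono inter_subset_left).trans (hcomp _ _ ih K hK)
  calc ν J = occupationMeasure κ ν A J := by rw [hν.occupationMeasure_eq hI hνI hA hνA]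
    _ ≤ ν A := occupationMeasure_apply_le (hmeas J hJ) fun N => partial_le N J hJ

end Excursions

section RandomMaps

open ProbabilityTheory

variable {α ι : Type*} [MeasurableSpace α] [Countable ι]

/-- The transition kernel of the chain moving `x` to `G i x` with weight `p i`. The weights need not
sum to one, so that the maps may be thinned out by lowering some of their weights. -/
noncomputable def randomMapKernel (G : ι → α → α) (hG : ∀ i, Measurable (G i)) (p : ι → ℝ≥0∞) :
    Kernel α α where
  toFun x := Measure.sum fun i => p i • Measure.dirac (G i x)
  measurable' := Measure.measurable_of_measurable_coe _ fun E hE => by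
    simp_rw [Measure.sum_apply _ hE, Measure.smul_apply]
    exact Measurable.tsum fun i =>
      ((Measure.measurable_coe hE).comp (Measure.measurable_dirac.comp (hG i))).const_smul (p i)

variable {G : ι → α → α} (hG : ∀ i, Measurable (G i)) {p q : ι → ℝ≥0∞} {ν : Measure α} {I : Set α}

lemma lintegral_randomMapKernel (p : ι → ℝ≥0∞) (x : α) {f : α → ℝ≥0∞} (hf : Measurable f) :
    ∫⁻ y, f y ∂randomMapKernel G hG p x = ∑' i, p i * f (G i x) := by
  change ∫⁻ y, f y ∂(Measure.sum fun i => p i • Measure.dirac (G i x)) = _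
  simp_rw [lintegral_sum_measure, lintegral_smul_measure, lintegral_dirac' _ hf, smul_eq_mul]

lemma randomMapKernel_apply_compl_eq_zero (p : ι → ℝ≥0∞) {M : Set α} (hM : MeasurableSet M)
    (hinv : ∀ i, MapsTo (G i) M M) {x : α} (hx : x ∈ M) : randomMapKernel G hG p x Mᶜ = 0 := by
  rw [← lintegral_indicator_one hM.compl,
    lintegral_randomMapKernel hG p x (measurable_one.indicator hM.compl)]
  exact ENNReal.tsum_eq_zero.2 fun i => by simp [hinv i hx]

lemma randomMapKernel_comp (p : ι → ℝ≥0∞) (m : Measure α) :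
    randomMapKernel G hG p ∘ₘ m = Measure.sum fun i => p i • m.map (G i) := by
  ext E hE
  rw [Measure.bind_apply hE (Kernel.aemeasurable _), Measure.sum_apply _ hE]
  calc ∫⁻ x, randomMapKernel G hG p x E ∂m = ∫⁻ x, ∑' i, p i * E.indicator 1 (G i x) ∂m := by
        refine lintegral_congr fun x => ?_
        rw [← lintegral_indicator_one hE,
          lintegral_randomMapKernel hG p x (measurable_one.indicator hE)]
    _ = ∑' i, p i * m.map (G i) E := by
        have hmeas (i : ι) : Measurable fun x => E.indicator (1 : α → ℝ≥0∞) (G i x) :=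
          (measurable_one.indicator hE).comp (hG i)
        rw [lintegral_tsum fun i => ((hmeas i).const_mul _).aemeasurable]
        refine tsum_congr fun i => ?_
        rw [lintegral_const_mul _ (hmeas i), ← lintegral_map (measurable_one.indicator hE) (hG i),
          lintegral_indicator_one hE]

lemma randomMapKernel_comp_apply (p : ι → ℝ≥0∞) (m : Measure α) {E : Set α}
    (hE : MeasurableSet E) :
    (randomMapKernel G hG p ∘ₘ m) E = ∑' i, p i * m (G i ⁻¹' E) := by
  rw [randomMapKernel_comp, Measure.sum_apply _ hE]
  exact tsum_congr fun i => by rw [Measure.smul_apply, Measure.map_apply (hG i) hE, smul_eq_mul]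

lemma randomMapKernel_pow_succ_apply (p : ι → ℝ≥0∞) (k : ℕ) (x : α) {E : Set α}
    (hE : MeasurableSet E) : (randomMapKernel G hG p ^ (k + 1)) x E =
      ∑' i, p i * (randomMapKernel G hG p ^ k) (G i x) E := by
  rw [add_comm, Kernel.pow_add_apply_eq_lintegral _ 1 k x hE, pow_one,
    lintegral_randomMapKernel hG p x (Kernel.measurable_coe _ hE)]

lemma randomMapKernel_add_comp (p q : ι → ℝ≥0∞) (m : Measure α) :
    randomMapKernel G hG (p + q) ∘ₘ m =
      randomMapKernel G hG p ∘ₘ m + randomMapKernel G hG q ∘ₘ m := by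
  ext E hE
  rw [Measure.add_apply, randomMapKernel_comp_apply hG _ _ hE, randomMapKernel_comp_apply hG _ _ hE,
    randomMapKernel_comp_apply hG _ _ hE, ← ENNReal.tsum_add]
  exact tsum_congr fun i => add_mul _ _ _

-- `ν` is then invariant for the weights `q` too, so the weights `p - q` carry no mass.
lemma IsRecurrentSet.weights_eq [SigmaFinite ν] [NeZero ν]
    (hI : IsRecurrentSet (randomMapKernel G hG q) I) (hνI : ν I ≠ ⊤)
    (hν : (randomMapKernel G hG p).Invariant ν) (hqp : q ≤ p) : q = p := by
  have decomposition : randomMapKernel G hG q ∘ₘ ν + randomMapKernel G hG (p - q) ∘ₘ ν = ν := by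
    rw [← randomMapKernel_add_comp, add_tsub_cancel_of_le hqp, hν.def]
  have hq : randomMapKernel G hG q ∘ₘ ν = ν :=
    hI.invariant_of_comp_le hνI ((Measure.le_add_right le_rfl).trans_eq decomposition)
  have rest_eq_zero : randomMapKernel G hG (p - q) ∘ₘ ν = 0 := by
    rw [hq] at decomposition
    exact (Measure.add_right_inj ν _ 0).1 (decomposition.trans (add_zero ν).symm)
  refine le_antisymm hqp fun i => tsub_eq_zero_iff_le.1 ?_
  have := randomMapKernel_comp_apply hG (p - q) ν MeasurableSet.univ
  rw [rest_eq_zero, Measure.coe_zero, Pi.zero_apply, eq_comm, ENNReal.tsum_eq_zero] at this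
  exact (mul_eq_zero.1 (this i)).resolve_right (NeZero.ne (ν univ))

end RandomMaps

section Gaps

open ProbabilityTheory

lemma exists_isOpen_inter_eq_singleton_of_finite {X : Type*} [TopologicalSpace X]
    [T1Space X] {M U : Set X} {x : X} (hx : x ∈ M) (hU : U ∈ 𝓝 x) (hfin : (U ∩ M).Finite) :
    ∃ V, IsOpen V ∧ x ∈ V ∧ V ∩ M = {x} := by
  refine ⟨interior U \ ((U ∩ M) \ {x}), isOpen_interior.sdiff (hfin.sdiff).isClosed,
    ⟨mem_interior_iff_mem_nhds.2 hU, fun h => h.2 rfl⟩, ?_⟩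
  refine Subset.antisymm (fun y hy => ?_) (singleton_subset_iff.2 ?_)
  · by_contra hyx
    exact hy.1.2 ⟨⟨interior_subset hy.1.1, hy.2⟩, hyx⟩
  · exact ⟨⟨mem_interior_iff_mem_nhds.2 hU, fun h => h.2 rfl⟩, hx⟩

variable {X : Type*} [LinearOrder X] [TopologicalSpace X] [OrderTopology X]
  [SecondCountableTopology X] [MeasurableSpace X] {M U I J : Set X} {ν : Measure X}

lemma exists_measure_ordConnectedComponent_compl_ne_zero {V : Set X} (hM : IsClosed M)
    (hV : ν (V \ M) ≠ 0) : ∃ t ∈ V \ M, ν (ordConnectedComponent Mᶜ t) ≠ 0 := by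
  by_contra! hnull
  refine hV (measure_null_of_locally_null _ fun t ht => ?_)
  have gap_mem_nhds : ordConnectedComponent Mᶜ t ∈ 𝓝 t :=
    ordConnectedComponent_mem_nhds.2 (hM.isOpen_compl.mem_nhds ht.2)
  exact ⟨_, mem_nhdsWithin_of_mem_nhds gap_mem_nhds, hnull t ht⟩

-- Three points of `M` in `U` would enclose a charged gap of mass at most `ν U`.
lemma finite_inter_of_measure_lt {c : ℝ≥0∞} (hM : IsClosed M) (hsupp : M ⊆ ν.support)
    (hνM : ν M = 0) (hgap : ∀ t, ν (ordConnectedComponent Mᶜ t) ≠ 0 →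
      c ≤ ν (ordConnectedComponent Mᶜ t))
    (hU : U.OrdConnected) (hνU : ν U < c) : (U ∩ M).Finite := by
  refine Set.finite_of_forall_not_lt_lt fun u hu y hy v hv huy hyv => ?_
  have charged : ν (Ioo u v \ M) ≠ 0 := by
    rw [measure_sdiff_null hνM]
    exact ((ν.mem_support_iff_forall y).1 (hsupp hy.2) _ (Ioo_mem_nhds huy hyv)).ne'
  obtain ⟨t, ht, hgap_ne⟩ := exists_measure_ordConnectedComponent_compl_ne_zero hM charged
  have gap_subset : ordConnectedComponent Mᶜ t ⊆ Icc u v := by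
    intro z hz
    refine ⟨le_of_not_gt fun hzu => hz ?_ hu.2, le_of_not_gt fun hvz => hz ?_ hv.2⟩
    · exact mem_uIcc.2 (Or.inr ⟨hzu.le, ht.1.1.le⟩)
    · exact mem_uIcc.2 (Or.inl ⟨ht.1.2.le, hvz.le⟩)
  exact (hgap t hgap_ne).not_gt
    ((measure_mono (gap_subset.trans (hU.out hu.1 hv.1))).trans_lt hνU)

variable [BorelSpace X] {ι : Type*} [Countable ι] {G : ι → X → X} (hG : ∀ i, Monotone (G i))
  {p : ι → ℝ≥0∞}

-- Preimages of gap intervals under the maps are again gap intervals, so a step of the chain puts on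
-- a gap interval at most the largest mass that some gap interval had before.
lemma IsErgodicMeasure.measure_le_ordConnectedComponent_compl [SigmaFinite ν]
    (hν : IsErgodicMeasure (randomMapKernel G (fun i => (hG i).measurable) p) ν)
    (hI : IsRecurrentSet (randomMapKernel G (fun i => (hG i).measurable) p) I) (hνI : ν I ≠ ⊤)
    (hp : ∑' i, p i ≤ 1) (hM : ∀ i, MapsTo (G i) M M) {t : X}
    (ht : ν (ordConnectedComponent Mᶜ t) ≠ 0) (hJ : J.OrdConnected) (hJM : J ⊆ Mᶜ) :
    ν J ≤ ν (ordConnectedComponent Mᶜ t) := by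
  refine hν.measure_le_of_comp_le hI hνI (OrdConnected.measurableSet inferInstance) ht
    (𝓙 := {K | K.OrdConnected ∧ K ⊆ Mᶜ}) (fun K hK => hK.1.measurableSet) ?_ ?_ ⟨hJ, hJM⟩
  · rintro K ⟨hK, hKM⟩
    refine or_iff_not_imp_right.2 fun hmeet => ?_
    obtain ⟨y, hyK, hy⟩ := not_disjoint_iff.1 hmeet
    rw [ordConnectedComponent_eq hy]
    exact subset_ordConnectedComponent hyK hKM
  · rintro m c hm K ⟨hK, hKM⟩
    have preimage_le (i : ι) : m (G i ⁻¹' K) ≤ c :=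
      hm _ ⟨hK.preimage_mono (hG i), fun x hx hxM => hKM hx (hM i hxM)⟩
    calc (randomMapKernel G (fun i => (hG i).measurable) p ∘ₘ m) K
        = ∑' i, p i * m (G i ⁻¹' K) := randomMapKernel_comp_apply _ p m hK.measurableSet
      _ ≤ ∑' i, p i * c := by gcongr with i; exact preimage_le i
      _ ≤ c := by
        rw [ENNReal.tsum_mul_right]
        exact mul_le_of_le_one_left' hp

theorem IsErgodicMeasure.exists_isOpen_inter_eq_singleton [SigmaFinite ν] [ν.OuterRegular]
    (hν : IsErgodicMeasure (randomMapKernel G (fun i => (hG i).measurable) p) ν)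
    (hI : IsRecurrentSet (randomMapKernel G (fun i => (hG i).measurable) p) I) (hνI : ν I ≠ ⊤)
    (hp : ∑' i, p i ≤ 1) (hMc : IsClosed M) (hM : ∀ i, MapsTo (G i) M M)
    (hsupp : M ⊂ ν.support) {x : X} (hx : x ∈ M) : ∃ V, IsOpen V ∧ x ∈ V ∧ V ∩ M = {x} := by
  have hνM : ν M = 0 :=
    hν.measure_eq_zero_of_ssubset_support hI hνI hMc
      (fun _ => randomMapKernel_apply_compl_eq_zero _ p hMc.measurableSet hM) hsupp
  have charged : ν (univ \ M) ≠ 0 := by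
    rw [measure_sdiff_null hνM]
    exact ((ν.mem_support_iff_forall x).1 (hsupp.subset hx) univ univ_mem).ne'
  obtain ⟨s, -, hs⟩ := exists_measure_ordConnectedComponent_compl_ne_zero hMc charged
  set c := ν (ordConnectedComponent Mᶜ s)
  have hgap (t : X) (ht : ν (ordConnectedComponent Mᶜ t) ≠ 0) :
      c ≤ ν (ordConnectedComponent Mᶜ t) :=
    hν.measure_le_ordConnectedComponent_compl hG hI hνI hp hM ht
      inferInstance ordConnectedComponent_subset
  have hνx : ν {x} < c := by
    rw [measure_mono_null (singleton_subset_iff.2 hx) hνM]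
    exact pos_iff_ne_zero.2 hs
  obtain ⟨U, hxU, hU, hνU⟩ := Set.exists_isOpen_lt_of_lt {x} c hνx
  have hfin := finite_inter_of_measure_lt hMc hsupp.subset hνM hgap
    (U := ordConnectedComponent U x) inferInstance
    ((measure_mono ordConnectedComponent_subset).trans_lt hνU)
  exact exists_isOpen_inter_eq_singleton_of_finite hx
    (ordConnectedComponent_mem_nhds.2 (hU.mem_nhds (singleton_subset_iff.1 hxU))) hfin

end Gaps

section DrivingSequence

open ProbabilityTheory

lemma preimage_eq_of_mem_measurableAtom {α : Type*} [MeasurableSpace α] {f : α → α}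
    (hf : ∀ a, f a ∈ measurableAtom a) {B : Set α} (hB : MeasurableSet B) : f ⁻¹' B = B := by
  refine Subset.antisymm (fun a ha => ?_) fun a ha => mem_of_mem_measurableAtom (hf a) hB ha
  by_contra haB
  exact mem_of_mem_measurableAtom (hf a) hB.compl haB ha

-- Measurable sets of sequences are saturated under `ω ↦ f ∘ ω`.
lemma measure_range_comp_of_mem_measurableAtom {α J : Type*} [MeasurableSpace α] {f : α → α}
    (hf : ∀ a, f a ∈ measurableAtom a) (P : Measure (J → α)) :
    P (range fun ω : J → α => f ∘ ω) = P univ := by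
  have le_invariants : (MeasurableSpace.pi : MeasurableSpace (J → α)) ≤
      MeasurableSpace.invariants fun ω : J → α => f ∘ ω := by
    refine iSup_le fun j => ?_
    rintro _ ⟨B, hB, rfl⟩
    refine ⟨measurable_pi_apply j hB, ?_⟩
    change (fun ω : J → α => ω j) ⁻¹' (f ⁻¹' B) = _
    rw [preimage_eq_of_mem_measurableAtom hf hB]
  set T := toMeasurable P (range fun ω : J → α => f ∘ ω)
  have T_eq_univ : T = univ := by
    rw [← (le_invariants T (measurableSet_toMeasurable _ _)).2]
    exact eq_univ_of_forall fun ω => subset_toMeasurable _ _ (mem_range_self ω)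
  rw [← T_eq_univ, measure_toMeasurable]

lemma measure_forall_ne_of_mem_measurableAtom {α J : Type*} [MeasurableSpace α] {a b : α}
    (hb : b ∈ measurableAtom a) (hba : b ≠ a) (P : Measure (J → α)) :
    P {ω | ∀ j, ω j ≠ a} = P univ := by
  classical
  have update_mem (x : α) : update id a b x ∈ measurableAtom x := by
    rcases eq_or_ne x a with rfl | hx
    · rwa [update_self]
    · rw [update_of_ne hx]
      exact mem_measurableAtom_self x
  refine le_antisymm (measure_mono (subset_univ _)) ?_
  rw [← measure_range_comp_of_mem_measurableAtom update_mem P]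
  refine measure_mono (range_subset_iff.2 fun ω j => ?_)
  rcases eq_or_ne (ω j) a with hω | hω
  · simpa [hω] using hba
  · simpa [update_of_ne hω] using hω

variable {ι : Type*} {G : ι → ℝ → ℝ}

lemma chain_congr {ω c : ℕ → ι} {n : ℕ} (h : ∀ j < n, ω j = c j) (x : ℝ) :
    chain G ω x n = chain G c x n := by
  induction n with
  | zero => rfl
  | succ n ih => rw [chain, chain, h n n.lt_succ_self, ih fun j hj => h j (hj.trans n.lt_succ_self)]

lemma chain_update_succ (c : ℕ → ι) (n : ℕ) (i : ι) (x : ℝ) :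
    chain G (update c n i) x (n + 1) = G i (chain G c x n) := by
  rw [chain, update_self, chain_congr fun j hj => update_of_ne hj.ne i c]

/-- The sequences in the alphabet `s` that start with the `n` letters `c 0, …, c (n - 1)` and drive
the chain from `x` into `E` at time `n + k`. -/
def cylinderVisit (G : ι → ℝ → ℝ) (s : Set ι) (E : Set ℝ) (x : ℝ) (n k : ℕ) (c : ℕ → ι) :
    Set (ℕ → ι) :=
  {ω | (∀ j < n, ω j = c j) ∧ (∀ j, ω j ∈ s) ∧ chain G ω x (n + k) ∈ E}

lemma cylinderVisit_succ_subset (G : ι → ℝ → ℝ) (s : Set ι) (E : Set ℝ) (x : ℝ) (n k : ℕ)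
    (c : ℕ → ι) :
    cylinderVisit G s E x n (k + 1) c ⊆
      ⋃ i : s, cylinderVisit G s E x (n + 1) k (update c n i) := by
  rintro ω ⟨hstart, hs, hE⟩
  refine mem_iUnion.2 ⟨⟨ω n, hs n⟩, fun j hj => ?_, hs, Nat.succ_add_eq_add_succ n k ▸ hE⟩
  rcases Nat.lt_succ_iff_lt_or_eq.1 hj with hlt | rfl
  · rw [update_of_ne hlt.ne, hstart j hlt]
  · rw [update_self]

variable [MeasurableSpace ι] {μm : Measure ι} {Q : Measure (ℕ → ι)}

lemma IsProd.isProbabilityMeasure [IsProbabilityMeasure μm] (hQ : IsProd μm Q) :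
    IsProbabilityMeasure Q := by
  obtain ⟨i⟩ := nonempty_of_isProbabilityMeasure μm
  exact ⟨by simpa using hQ 0 fun _ => i⟩

lemma IsProd.measure_cylinderVisit_zero_le (hQ : IsProd μm Q) (G : ι → ℝ → ℝ) (s : Set ι)
    {E : Set ℝ} (hE : MeasurableSet E) (x : ℝ) (n : ℕ) (c : ℕ → ι) :
    Q (cylinderVisit G s E x n 0 c) ≤
      (∏ j ∈ Finset.range n, μm {c j}) * Measure.dirac (chain G c x n) E := by
  rw [Measure.dirac_apply' _ hE, ← hQ n c]
  by_cases hcE : chain G c x n ∈ E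
  · rw [indicator_of_mem hcE, Pi.one_apply, mul_one]
    exact measure_mono fun ω hω => hω.1
  · have : cylinderVisit G s E x n 0 c = ∅ :=
      eq_empty_of_forall_notMem fun ω hω => hcE (chain_congr hω.1 x ▸ hω.2.2)
    rw [this, measure_empty]
    exact zero_le

variable [Countable ι]

-- Cylinders need not be measurable here, so the estimate uses `Q` as an outer measure only.
lemma IsProd.measure_cylinderVisit_le (hQ : IsProd μm Q) (hG : ∀ i, Measurable (G i)) (s : Set ι)
    {E : Set ℝ} (hE : MeasurableSet E) (x : ℝ) (n k : ℕ) (c : ℕ → ι) :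
    Q (cylinderVisit G s E x n k c) ≤ (∏ j ∈ Finset.range n, μm {c j}) *
      (randomMapKernel G hG (s.indicator fun i => μm {i}) ^ k) (chain G c x n) E := by
  set κ := randomMapKernel G hG (s.indicator fun i => μm {i})
  induction k generalizing n c with
  | zero => exact hQ.measure_cylinderVisit_zero_le G s hE x n c
  | succ k ih =>
    have prod_update (i : ι) : ∏ j ∈ Finset.range (n + 1), μm {update c n i j} =
        (∏ j ∈ Finset.range n, μm {c j}) * μm {i} := by
      rw [Finset.prod_range_succ, update_self]
      congr 1
      exact Finset.prod_congr rfl fun j hj => by rw [update_of_ne (Finset.mem_range.1 hj).ne]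
    calc Q (cylinderVisit G s E x n (k + 1) c)
        ≤ ∑' i : s, Q (cylinderVisit G s E x (n + 1) k (update c n i)) :=
          (measure_mono (cylinderVisit_succ_subset G s E x n k c)).trans (measure_iUnion_le _)
      _ ≤ ∑' i : s, (∏ j ∈ Finset.range n, μm {c j}) *
            (μm {(i : ι)} * (κ ^ k) (G i (chain G c x n)) E) := by
          refine ENNReal.tsum_le_tsum fun i => (ih (n + 1) _).trans_eq ?_
          rw [prod_update, chain_update_succ, mul_assoc]
      _ = (∏ j ∈ Finset.range n, μm {c j}) * (κ ^ (k + 1)) (chain G c x n) E := by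
          rw [ENNReal.tsum_mul_left, randomMapKernel_pow_succ_apply hG _ _ _ hE,
            tsum_subtype s fun i => μm {i} * (κ ^ k) (G i (chain G c x n)) E]
          simp_rw [indicator_mul_left]
          rfl

lemma IsProd.isRecurrentSet (hQ : IsProd μm Q) (hG : ∀ i, Measurable (G i)) {s : Set ι}
    (hs : Q {ω | ∀ j, ω j ∈ s} ≠ 0) {E : Set ℝ} (hE : MeasurableSet E)
    (hrec : ∀ x, ∀ᵐ ω ∂Q, ∃ᶠ n in atTop, chain G ω x n ∈ E) :
    IsRecurrentSet (randomMapKernel G hG (s.indicator fun i => μm {i})) E := by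
  refine ⟨hE, fun x => ?_⟩
  by_contra hfinite
  let visit (k : ℕ) : Set (ℕ → ι) := {ω | (∀ j, ω j ∈ s) ∧ chain G ω x k ∈ E}
  obtain ⟨ω₀, -⟩ := nonempty_of_measure_ne_zero hs
  have visit_le (k : ℕ) :
      Q (visit k) ≤ (randomMapKernel G hG (s.indicator fun i => μm {i}) ^ k) x E := by
    simpa [cylinderVisit, chain] using hQ.measure_cylinderVisit_le hG s hE x 0 k ω₀
  have limsup_null : Q (limsup visit atTop) = 0 :=
    measure_limsup_atTop_eq_zero (ne_top_of_le_ne_top hfinite (ENNReal.tsum_le_tsum visit_le))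
  refine hs (measure_mono_null (fun ω hω => ?_) (measure_union_null limsup_null (hrec x)))
  by_cases hfreq : ∃ᶠ n in atTop, chain G ω x n ∈ E
  · exact Or.inl (mem_limsup_iff_frequently_mem.2 (hfreq.mono fun n hn => ⟨hω, hn⟩))
  · exact Or.inr hfreq

-- When `i` shares its atom with another index, the sequences avoiding `i` have full outer measure,
-- so the chain stays recurrent after the map `G i` is removed.
lemma IsProd.measure_singleton_eq_zero_of_measurableAtom_ne [IsProbabilityMeasure μm]
    (hQ : IsProd μm Q) (hG : ∀ i, Measurable (G i)) {ν : Measure ℝ} [SigmaFinite ν] [NeZero ν]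
    (hν : (randomMapKernel G hG fun i => μm {i}).Invariant ν) {E : Set ℝ} (hE : MeasurableSet E)
    (hνE : ν E ≠ ⊤) (hrec : ∀ x, ∀ᵐ ω ∂Q, ∃ᶠ n in atTop, chain G ω x n ∈ E) {i : ι}
    (hi : measurableAtom i ≠ {i}) : μm {i} = 0 := by
  obtain ⟨j, hj, hji⟩ : ∃ j ∈ measurableAtom i, j ≠ i := by
    by_contra! h
    exact hi (eq_singleton_iff_unique_mem.2 ⟨mem_measurableAtom_self i, h⟩)
  have := hQ.isProbabilityMeasure
  have avoid_ne_zero : Q {ω | ∀ n, ω n ∈ ({i}ᶜ : Set ι)} ≠ 0 := by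
    rw [show {ω : ℕ → ι | ∀ n, ω n ∈ ({i}ᶜ : Set ι)} = {ω | ∀ n, ω n ≠ i} from rfl,
      measure_forall_ne_of_mem_measurableAtom hj hji Q, measure_univ]
    exact one_ne_zero
  have weights_eq := (hQ.isRecurrentSet hG avoid_ne_zero hE hrec).weights_eq hG hνE hν
    (indicator_le_self _ _)
  simpa using (congrFun weights_eq i).symm

lemma IsProd.tsum_measure_singleton_le_one [IsProbabilityMeasure μm]
    (hQ : IsProd μm Q) (hG : ∀ i, Measurable (G i)) {ν : Measure ℝ} [SigmaFinite ν] [NeZero ν]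
    (hν : (randomMapKernel G hG fun i => μm {i}).Invariant ν) {E : Set ℝ} (hE : MeasurableSet E)
    (hνE : ν E ≠ ⊤) (hrec : ∀ x, ∀ᵐ ω ∂Q, ∃ᶠ n in atTop, chain G ω x n ∈ E) :
    ∑' i, μm {i} ≤ 1 := by
  have singleton_nullMeasurable (i : ι) : NullMeasurableSet {i} μm := by
    by_cases hi : measurableAtom i = {i}
    · rw [← hi]
      exact (MeasurableSet.measurableAtom_of_countable i).nullMeasurableSet
    · exact NullMeasurableSet.of_null
        (hQ.measure_singleton_eq_zero_of_measurableAtom_ne hG hν hE hνE hrec hi)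
  rw [← measure_univ (μ := μm)]
  exact tsum_measure_le_measure_univ singleton_nullMeasurable fun i j hij =>
    (disjoint_singleton.2 hij).aedisjoint

end DrivingSequence

section RadonMeasures

open ProbabilityTheory

lemma hasCompactSupport_comp_of_monotone_of_surjective {f g : ℝ → ℝ} (hf : HasCompactSupport f)
    (hmono : Monotone g) (hsurj : Surjective g) : HasCompactSupport fun x => f (g x) := by
  obtain ⟨a, b, hab⟩ := bddBelow_bddAbove_iff_subset_Icc.1
    ⟨hf.isCompact.bddBelow, hf.isCompact.bddAbove⟩
  obtain ⟨u, hu⟩ := hsurj (a - 1)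
  obtain ⟨v, hv⟩ := hsurj (b + 1)
  refine HasCompactSupport.of_support_subset_isCompact (isCompact_Icc (a := u) (b := v)) ?_
  intro x hx
  have hgx : g x ∈ Icc a b := hab (subset_tsupport f hx)
  constructor
  · exact (hmono.reflect_lt (by linarith [hgx.1])).le
  · exact (hmono.reflect_lt (by linarith [hgx.2])).le

variable {ι : Type*} {G : ι → ℝ → ℝ} {m : Measure ℝ}

-- A nonsummable series would have the junk value `0`, which no positive `∫ x, f x ∂m` equals.
lemma IsInv.summable [MeasurableSpace ι] {μm : Measure ι} (h : IsInv G μm m) {f : ℝ → ℝ}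
    (hf : Continuous f) (hfc : HasCompactSupport f) (hpos : 0 < ∫ x, f x ∂m) :
    Summable fun i => (μm {i}).toReal * ∫ x, f (G i x) ∂m := by
  by_contra hns
  rw [h f hf hfc, tsum_eq_zero_of_not_summable hns] at hpos
  exact lt_irrefl _ hpos

variable [Countable ι] (hmono : ∀ i, Monotone (G i))

lemma integral_randomMapKernel_comp {p : ι → ℝ≥0∞} {f : ℝ → ℝ} (hG : ∀ i, Measurable (G i))
    (hf : Integrable f (randomMapKernel G hG p ∘ₘ m)) (hfm : StronglyMeasurable f) :
    ∫ x, f x ∂(randomMapKernel G hG p ∘ₘ m) = ∑' i, (p i).toReal * ∫ x, f (G i x) ∂m := by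
  rw [randomMapKernel_comp] at hf ⊢
  rw [← (hasSum_integral_measure hf).tsum_eq]
  refine tsum_congr fun i => ?_
  rw [integral_smul_measure, integral_map (hG i).aemeasurable hfm.aestronglyMeasurable, smul_eq_mul]

lemma lintegral_randomMapKernel_comp (p : ι → ℝ≥0∞) {f : ℝ → ℝ≥0∞} (hG : ∀ i, Measurable (G i))
    (hf : Measurable f) :
    ∫⁻ x, f x ∂(randomMapKernel G hG p ∘ₘ m) = ∑' i, p i * ∫⁻ x, f (G i x) ∂m := by
  simp_rw [randomMapKernel_comp, lintegral_sum_measure, lintegral_smul_measure,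
    lintegral_map hf (hG _), smul_eq_mul]

variable [MeasurableSpace ι] {μm : Measure ι} [IsFiniteMeasure μm] [IsFiniteMeasureOnCompacts m]

lemma IsInv.lintegral_comp_lt_top (hsurj : ∀ i, Surjective (G i)) (h : IsInv G μm m) {f : ℝ → ℝ}
    (hf : Continuous f) (hfc : HasCompactSupport f) (hf0 : 0 ≤ f) (hpos : 0 < ∫ x, f x ∂m) :
    ∫⁻ x, ENNReal.ofReal (f x)
      ∂(randomMapKernel G (fun i => (hmono i).measurable) (fun i => μm {i}) ∘ₘ m) < ⊤ := by
  have integrable_comp (i : ι) : Integrable (fun x => f (G i x)) m :=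
    Continuous.integrable_of_hasCompactSupport
      (hf.comp ((hmono i).continuous_of_surjective (hsurj i)))
      (hasCompactSupport_comp_of_monotone_of_surjective hfc (hmono i) (hsurj i))
  have term_eq (i : ι) : μm {i} * ∫⁻ x, ENNReal.ofReal (f (G i x)) ∂m =
      ENNReal.ofReal ((μm {i}).toReal * ∫ x, f (G i x) ∂m) := by
    rw [ENNReal.ofReal_mul ENNReal.toReal_nonneg, ENNReal.ofReal_toReal (measure_ne_top _ _),
      ofReal_integral_eq_lintegral_ofReal (integrable_comp i) (ae_of_all _ fun x => hf0 (G i x))]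
  rw [lintegral_randomMapKernel_comp _ _ hf.measurable.ennreal_ofReal, tsum_congr term_eq,
    ← ENNReal.ofReal_tsum_of_nonneg
      (fun i => mul_nonneg ENNReal.toReal_nonneg (integral_nonneg fun x => hf0 (G i x)))
      (h.summable hf hfc hpos)]
  exact ENNReal.ofReal_lt_top

lemma IsInv.isFiniteMeasureOnCompacts_comp [NeZero m] (hsurj : ∀ i, Surjective (G i))
    (h : IsInv G μm m) : IsFiniteMeasureOnCompacts
      (randomMapKernel G (fun i => (hmono i).measurable) (fun i => μm {i}) ∘ₘ m) := by
  refine ⟨fun K hK => ?_⟩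
  obtain ⟨y, hy⟩ := Measure.nonempty_support (NeZero.ne m)
  have ball_pos : 0 < m (Metric.closedBall y 1) :=
    (m.mem_support_iff_forall y).1 hy _ (Metric.closedBall_mem_nhds y one_pos)
  obtain ⟨f, hf_one, -, hfc, hf01⟩ := exists_continuous_one_zero_of_isCompact
    (hK.union (isCompact_closedBall y 1)) isClosed_empty (disjoint_empty _)
  have hf0 : 0 ≤ ⇑f := fun x => (hf01 x).1
  have integral_pos : 0 < ∫ x, f x ∂m := by
    rw [integral_pos_iff_support_of_nonneg hf0
      (f.continuous.integrable_of_hasCompactSupport hfc)]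
    refine ball_pos.trans_le (measure_mono fun x hx => ?_)
    rw [mem_support, hf_one (Or.inr hx)]
    exact one_ne_zero
  refine lt_of_le_of_lt ?_ (h.lintegral_comp_lt_top hmono hsurj f.continuous hfc hf0 integral_pos)
  rw [← lintegral_indicator_one hK.measurableSet]
  refine lintegral_mono (indicator_le fun x hx => ?_)
  rw [hf_one (Or.inl hx), Pi.one_apply, Pi.one_apply, ENNReal.ofReal_one]

theorem isInv_iff_invariant (hsurj : ∀ i, Surjective (G i)) : IsInv G μm m ↔
    (randomMapKernel G (fun i => (hmono i).measurable) fun i => μm {i}).Invariant m := by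
  set κ := randomMapKernel G (fun i => (hmono i).measurable) fun i => μm {i}
  have integral_comp [IsFiniteMeasureOnCompacts (κ ∘ₘ m)] {f : ℝ → ℝ} (hf : Continuous f)
      (hfc : HasCompactSupport f) :
      ∫ x, f x ∂(κ ∘ₘ m) = ∑' i, (μm {i}).toReal * ∫ x, f (G i x) ∂m :=
    integral_randomMapKernel_comp _ (hf.integrable_of_hasCompactSupport hfc) hf.stronglyMeasurable
  constructor
  · intro h
    rcases eq_zero_or_neZero m with rfl | hm
    · exact Measure.bind_zero_left κ
    have := h.isFiniteMeasureOnCompacts_comp hmono hsurj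
    exact Measure.ext_of_integral_eq_on_compactlySupported fun f =>
      (integral_comp f.continuous f.hasCompactSupport).trans
        (h f f.continuous f.hasCompactSupport).symm
  · intro h f hf hfc
    have : IsFiniteMeasureOnCompacts (κ ∘ₘ m) := h.def.symm ▸ inferInstance
    rw [← integral_comp hf hfc, h.def]

lemma IsErg.isErgodicMeasure (hsurj : ∀ i, Surjective (G i)) (h : IsErg G μm m) :
    IsErgodicMeasure (randomMapKernel G (fun i => (hmono i).measurable) fun i => μm {i}) m :=
  ⟨(isInv_iff_invariant hmono hsurj).1 h.1, fun A hA hinv =>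
    h.2 A hA ((isInv_iff_invariant hmono hsurj).2 hinv)⟩

lemma msupp_eq_support (ν : Measure ℝ) : msupp ν = ν.support := by
  rw [Measure.support_eq_forall_isOpen]
  exact Set.ext fun x => forall_congr' fun U => forall_comm

end RadonMeasures

theorem support_minimal_or_contains_discrete_general
    {ι : Type*} [Countable ι] [MeasurableSpace ι] {G : ι → ℝ → ℝ}
    (hmono : ∀ i, Monotone (G i)) (hsurj : ∀ i, Surjective (G i))
    {μm : Measure ι} [IsProbabilityMeasure μm] {Q : Measure (ℕ → ι)} (hQ : IsProd μm Q)
    (hR : CondR G Q) {ν : Measure ℝ} (hrad : IsRadon ν) (herg : IsErg G μm ν) :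
    (∀ M : Set ℝ, M ⊆ msupp ν → M.Nonempty → IsClosed M →
        (∀ i, G i '' M ⊆ M) → M = msupp ν) ∨
    (∃ M : Set ℝ, M ⊆ msupp ν ∧ M.Nonempty ∧ (∀ i, G i '' M ⊆ M) ∧
        ∀ x ∈ M, ∃ U : Set ℝ, IsOpen U ∧ x ∈ U ∧ U ∩ M = {x}) := by
  refine or_iff_not_imp_left.2 fun not_minimal => ?_
  push Not at not_minimal
  obtain ⟨M, hsupp, hne, hMc, hM, hM_ne⟩ := not_minimal
  refine ⟨M, hsupp, hne, hM, fun x hx => ?_⟩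
  rw [msupp_eq_support] at hsupp hM_ne
  have : IsFiniteMeasureOnCompacts ν := ⟨hrad⟩
  have : NeZero ν := ⟨Measure.nonempty_support_iff.1 (hne.mono hsupp)⟩
  have := hQ.isProbabilityMeasure
  obtain ⟨a, b, -, hrec⟩ := hR
  have hνI : ν (Icc a b) ≠ ⊤ := isCompact_Icc.measure_ne_top
  have ergodic := herg.isErgodicMeasure hmono hsurj
  have recurrent := hQ.isRecurrentSet (fun i => (hmono i).measurable) (s := univ) (by simp)
    measurableSet_Icc hrec
  rw [indicator_univ] at recurrent
  have weights_le_one : ∑' i, μm {i} ≤ 1 :=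
    hQ.tsum_measure_singleton_le_one _ ergodic.1 measurableSet_Icc hνI hrec
  exact ergodic.exists_isOpen_inter_eq_singleton hmono recurrent hνI weights_le_one hMc
    (fun i => mapsTo_iff_image_subset.2 (hM i)) (hsupp.ssubset_of_ne hM_ne) hx

/-- **Theorem.** Under conditions (R) and (U), the support of every ergodic invariant
Radon measure `ν` is either minimal among nonempty closed `Γ`-invariant sets, or it
contains a nonempty `Γ`-invariant set all of whose points are isolated. -/
theorem support_minimal_or_contains_discrete
    {ι : Type*} [Countable ι] [MeasurableSpace ι]
    (G : ι → ℝ → ℝ) (hG : ∀ i, IsOPH (G i))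
    (μm : Measure ι) [IsProbabilityMeasure μm] (hpos : ∀ i, 0 < μm {i})
    (Q : Measure (ℕ → ι)) (hQ : IsProd μm Q)
    (hR : CondR G Q) (hU : CondU G)
    (ν : Measure ℝ) (hrad : IsRadon ν) (herg : IsErg G μm ν) :
    (∀ M : Set ℝ, M ⊆ msupp ν → M.Nonempty → IsClosed M →
        (∀ i, G i '' M ⊆ M) → M = msupp ν) ∨
    (∃ M : Set ℝ, M ⊆ msupp ν ∧ M.Nonempty ∧ (∀ i, G i '' M ⊆ M) ∧
        ∀ x ∈ M, ∃ U : Set ℝ, IsOpen U ∧ x ∈ U ∧ U ∩ M = {x}) :=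
  support_minimal_or_contains_discrete_general (fun i => (hG i).1.monotone)
    (fun i => (hG i).2) hQ hR hrad herg
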